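/- arXiv:math/0412502 — 7 statements merged into one kernel-verified Lean document; each statement's English description precedes it below -/
import Mathlib

section
/- Let V and W be finite-dimensional real vector spaces, i : W → V a linear map, and L a linear Dirac structure on V. Then the pullback i*L := {Y ⊕ (ξ ∘ i) : Y ∈ W, ξ ∈ V*, i(Y) ⊕ ξ ∈ L} is a linear Dirac structure on W. -/
noncomputable section

open Module

variable {V : Type} [AddCommGroup V] [Module ℝ V] [FiniteDimensional ℝ V]

/-- The symmetric pairing `⟨X₁⊕ξ₁, X₂⊕ξ₂⟩₊ = (1/2)(ξ₁(X₂) + ξ₂(X₁))` on `V ⊕ V*`. -/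
def diracPairing (a b : V × Module.Dual ℝ V) : ℝ :=
  (1 / 2) * (a.2 b.1 + b.2 a.1)

/-- A subspace of `V ⊕ V*` is isotropic if the pairing vanishes on all pairs of its elements. -/
def IsIsotropic (L : Submodule ℝ (V × Module.Dual ℝ V)) : Prop :=
  ∀ a ∈ L, ∀ b ∈ L, diracPairing a b = 0

/-- A linear Dirac structure on `V`: an isotropic subspace of `V ⊕ V*` that is maximal
among isotropic subspaces. -/
def IsDirac (L : Submodule ℝ (V × Module.Dual ℝ V)) : Prop :=
  IsIsotropic L ∧
    ∀ L' : Submodule ℝ (V × Module.Dual ℝ V), IsIsotropic L' → L ≤ L' → L' = L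

theorem dirac_factor {A B : Type} [AddCommGroup A] [Module ℝ A] [AddCommGroup B] [Module ℝ B]
    (T : A →ₗ[ℝ] B) (φ : A →ₗ[ℝ] ℝ) (h : ∀ a, T a = 0 → φ a = 0) :
    ∃ ξ : B →ₗ[ℝ] ℝ, ∀ a, ξ (T a) = φ a := by
  have hφ : φ ∈ LinearMap.range T.dualMap := by
    rw [LinearMap.range_dualMap_eq_dualAnnihilator_ker]
    exact (Submodule.mem_dualAnnihilator _).2 fun a ha => h a ha
  obtain ⟨ξ, hξ⟩ := hφ
  exact ⟨ξ, fun a => LinearMap.congr_fun hξ a⟩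

theorem dirac_perp_mem (L : Submodule ℝ (V × Module.Dual ℝ V)) (hL : IsDirac L)
    (X : V) (ξ : Module.Dual ℝ V) (h : ∀ a ∈ L, ξ a.1 + a.2 X = 0) : (X, ξ) ∈ L := by
  obtain ⟨hiso, hmax⟩ := hL
  have iso' : ∀ a ∈ L, ∀ b ∈ L, a.2 b.1 + b.2 a.1 = 0 := by
    intro a ha b hb
    have := hiso a ha b hb
    unfold diracPairing at this
    linarith
  -- annihilating covectors lie in L
  have key : ∀ η : Module.Dual ℝ V, (∀ a ∈ L, η a.1 = 0) → ((0 : V), η) ∈ L := by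
    intro η hη
    have hI : IsIsotropic (L ⊔ Submodule.span ℝ {((0 : V), η)}) := by
      intro a ha b hb
      obtain ⟨a', ha', za, hza, rfl⟩ := Submodule.mem_sup.1 ha
      obtain ⟨s, rfl⟩ := Submodule.mem_span_singleton.1 hza
      obtain ⟨b', hb', zb, hzb, rfl⟩ := Submodule.mem_sup.1 hb
      obtain ⟨t, rfl⟩ := Submodule.mem_span_singleton.1 hzb
      have h1 := iso' _ ha' _ hb'
      have h2 := hη _ ha'
      have h3 := hη _ hb'
      simp [diracPairing, h2, h3, h1]
    rw [← hmax _ hI le_sup_left]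
    exact Submodule.mem_sup_right (Submodule.mem_span_singleton_self _)
  have hX : X ∈ L.map (LinearMap.fst ℝ V (Module.Dual ℝ V)) := by
    rw [← Subspace.forall_mem_dualAnnihilator_apply_eq_zero_iff]
    intro η hη
    have h0 := h _ (key η fun a ha =>
      (Submodule.mem_dualAnnihilator _).1 hη _ (Submodule.mem_map_of_mem ha))
    simpa using h0
  obtain ⟨⟨X', η⟩, hm, hx⟩ := hX
  have hx : X' = X := hx
  subst hx
  have hd := key (ξ - η) (fun a ha => by
    have h1 := h a ha
    have h2 := iso' _ hm a ha
    simp only [LinearMap.sub_apply] at *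
    linarith)
  have := L.add_mem hm hd
  simpa using this

/-- The pullback `i*L = {Y ⊕ (ξ ∘ i) : i(Y) ⊕ ξ ∈ L}` of a linear Dirac
structure `L` on `V` along a linear map `i : W → V` is a linear Dirac structure on `W`. -/
theorem dirac_pullback {W : Type} [AddCommGroup W] [Module ℝ W] [FiniteDimensional ℝ W]
    (i : W →ₗ[ℝ] V) (L : Submodule ℝ (V × Module.Dual ℝ V)) (hL : IsDirac L)
    (L' : Submodule ℝ (W × Module.Dual ℝ W))
    (hL' : (L' : Set (W × Module.Dual ℝ W)) =
      {z | ∃ (Y : W) (ξ : Module.Dual ℝ V), (i Y, ξ) ∈ L ∧ z = (Y, ξ.comp i)}) :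
    IsDirac L' := by
  have mem' : ∀ z, z ∈ L' ↔ ∃ (Y : W) (ξ : Module.Dual ℝ V), (i Y, ξ) ∈ L ∧ z = (Y, ξ.comp i) := by
    intro z
    rw [← SetLike.mem_coe, hL']
    rfl
  refine ⟨?_, ?_⟩
  · intro a ha b hb
    obtain ⟨Y, ξ, h1, rfl⟩ := (mem' a).1 ha
    obtain ⟨Z, η, h2, rfl⟩ := (mem' b).1 hb
    exact hL.1 _ h1 _ h2
  · intro M hM hle
    refine le_antisymm ?_ hle
    rintro ⟨Y, β⟩ hz
    have hperp : ∀ (Z : W) (η : Module.Dual ℝ V), (i Z, η) ∈ L → β Z + η (i Y) = 0 := by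
      intro Z η hZ
      have := hM _ hz _ (hle ((mem' _).2 ⟨Z, η, hZ, rfl⟩))
      simp only [diracPairing, LinearMap.comp_apply] at this
      linarith
    let T : (W × L) →ₗ[ℝ] V :=
      i.coprod ((LinearMap.fst ℝ V (Module.Dual ℝ V)).comp L.subtype)
    let φ : (W × L) →ₗ[ℝ] ℝ :=
      β.coprod (-((Module.Dual.eval ℝ V (i Y)).comp
        ((LinearMap.snd ℝ V (Module.Dual ℝ V)).comp L.subtype)))
    have hφ : ∀ a, T a = 0 → φ a = 0 := by
      rintro ⟨w, ⟨⟨X', η⟩, hm⟩⟩ hk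
      have hk : i w + X' = 0 := hk
      have hX : X' = i (-w) := by rw [map_neg]; exact (neg_eq_of_add_eq_zero_right hk).symm
      have h0 := hperp (-w) η (hX ▸ hm)
      rw [map_neg] at h0
      change β w + -(η (i Y)) = 0
      linarith
    obtain ⟨ξ, hξ⟩ := dirac_factor (A := W × L) (B := V) T φ hφ
    have hT : ∀ (w : W) (a : L), ξ (i w + a.1.1) = β w + -(a.1.2 (i Y)) := fun w a =>
      hξ (w, a)
    refine (mem' _).2 ⟨Y, ξ, dirac_perp_mem L hL _ _ ?_, ?_⟩
    · intro a ha
      have := hT 0 ⟨a, ha⟩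
      simp only [map_zero, zero_add] at this
      linarith
    · congr 1
      ext w
      have := hT w 0
      simpa using this.symm
end
end

section
/- Let V be a finite-dimensional real vector space, Λ : V* × V* → ℝ a skew-symmetric bilinear form with induced map Λ̃ : V* → V (characterized by η(Λ̃ξ) = Λ(η, ξ) for all η, ξ ∈ V*), and E ∈ V. Then the subspace {(Λ̃ξ − gE, ξ(E)) ⊕ (ξ, g) : ξ ∈ V*, g ∈ ℝ} of (V × ℝ) ⊕ (V* × ℝ) is a linear Dirac-Jacobi structure on V. -/
noncomputable section

open Module

variable {V : Type} [AddCommGroup V] [Module ℝ V] [FiniteDimensional ℝ V]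

/-- The symmetric pairing on `(V × ℝ) ⊕ (V* × ℝ)`:
`⟨(X₁,f₁)⊕(ξ₁,g₁), (X₂,f₂)⊕(ξ₂,g₂)⟩₊ = (1/2)(ξ₁(X₂) + ξ₂(X₁) + g₁f₂ + g₂f₁)`. -/
def djPairing (a b : (V × ℝ) × (Module.Dual ℝ V × ℝ)) : ℝ :=
  (1 / 2) * (a.2.1 b.1.1 + b.2.1 a.1.1 + a.2.2 * b.1.2 + b.2.2 * a.1.2)

/-- A subspace of `(V × ℝ) ⊕ (V* × ℝ)` is isotropic if the pairing vanishes on all pairs. -/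
def IsIsotropicJ (L : Submodule ℝ ((V × ℝ) × (Module.Dual ℝ V × ℝ))) : Prop :=
  ∀ a ∈ L, ∀ b ∈ L, djPairing a b = 0

/-- A linear Dirac-Jacobi structure on `V`: a maximal isotropic subspace of
`(V × ℝ) ⊕ (V* × ℝ)`. -/
def IsDiracJacobi (L : Submodule ℝ ((V × ℝ) × (Module.Dual ℝ V × ℝ))) : Prop :=
  IsIsotropicJ L ∧
    ∀ L' : Submodule ℝ ((V × ℝ) × (Module.Dual ℝ V × ℝ)), IsIsotropicJ L' → L ≤ L' → L' = L

/-- For a skew-symmetric bilinear form `Λ` on `V*` with induced map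
`Λ̃ : V* → V` (so `η(Λ̃ξ) = Λ(η,ξ)`) and a vector `E ∈ V`, the subspace
`{(Λ̃ξ − gE, ξ(E)) ⊕ (ξ, g) : ξ ∈ V*, g ∈ ℝ}` is a linear Dirac-Jacobi structure on `V`. -/
theorem dirac_jacobi_graph_of_jacobi (Λ : Module.Dual ℝ V →ₗ[ℝ] Module.Dual ℝ V →ₗ[ℝ] ℝ)
    (hskew : ∀ η ξ : Module.Dual ℝ V, Λ η ξ = - Λ ξ η)
    (Λt : Module.Dual ℝ V →ₗ[ℝ] V)
    (hΛt : ∀ η ξ : Module.Dual ℝ V, η (Λt ξ) = Λ η ξ)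
    (E : V)
    (L : Submodule ℝ ((V × ℝ) × (Module.Dual ℝ V × ℝ)))
    (hLc : (L : Set ((V × ℝ) × (Module.Dual ℝ V × ℝ))) =
      {z | ∃ (ξ : Module.Dual ℝ V) (g : ℝ), z = ((Λt ξ - g • E, ξ E), (ξ, g))}) :
    IsDiracJacobi L := by
  have mem : ∀ z, z ∈ L ↔ ∃ (ξ : Module.Dual ℝ V) (g : ℝ),
      z = ((Λt ξ - g • E, ξ E), (ξ, g)) := by
    intro z
    rw [← SetLike.mem_coe, hLc]
    rfl
  refine ⟨?_, ?_⟩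
  · intro a ha b hb
    obtain ⟨ξ, g, rfl⟩ := (mem a).1 ha
    obtain ⟨η, h, rfl⟩ := (mem b).1 hb
    simp only [djPairing, map_sub, map_smul, smul_eq_mul, hΛt]
    rw [hskew ξ η]
    ring
  · intro L' hiso hle
    refine le_antisymm ?_ hle
    rintro ⟨⟨X, f⟩, ⟨ξ, g⟩⟩ hz
    have key : ∀ (η : Module.Dual ℝ V) (h : ℝ),
        ξ (Λt η - h • E) + η X + g * η E + h * f = 0 := by
      intro η h
      have := hiso _ hz _ (hle ((mem ((Λt η - h • E, η E), (η, h))).2 ⟨η, h, rfl⟩))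
      simp only [djPairing] at this
      linarith
    have hf : f = ξ E := by
      have := key 0 1
      simp at this
      linarith
    have hX : X = Λt ξ - g • E := by
      rw [← sub_eq_zero, ← Module.forall_dual_apply_eq_zero_iff ℝ]
      intro η
      have := key η 0
      simp only [map_sub, map_smul, smul_eq_mul, hΛt] at this ⊢
      rw [hskew ξ η] at this
      linarith
    exact (mem _).2 ⟨ξ, g, by rw [hX, hf]⟩
end
end

section
/- Let L be a linear Dirac structure on a finite-dimensional real vector space V and let β : L → ℝ be a linear functional. Then: (a) there exists an element A ⊕ α ∈ V ⊕ V* with α(A) = 0 such that β(X ⊕ ξ) = α(X) + ξ(A) (= 2⟨A⊕α, X⊕ξ⟩₊) for all X ⊕ ξ ∈ L; (b) if A ⊕ α is one such element, then an element A′ ⊕ α′ ∈ V ⊕ V* satisfies the same two conditions (α′(A′) = 0 and β(X⊕ξ) = α′(X) + ξ(A′) on L) if and only if A′ ⊕ α′ = A ⊕ α + Y ⊕ η for some Y ⊕ η ∈ L with β(Y ⊕ η) = 0. -/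
noncomputable section

open Module

variable {V : Type} [AddCommGroup V] [Module ℝ V] [FiniteDimensional ℝ V]

theorem dirac_null_mem (L : Submodule ℝ (V × Module.Dual ℝ V)) (hL : IsDirac L)
    (u : V × Module.Dual ℝ V) (h0 : u.2 u.1 = 0)
    (hu : ∀ z ∈ L, u.2 z.1 + z.2 u.1 = 0) : u ∈ L := by
  have h := hL.2 (L ⊔ Submodule.span ℝ {u}) ?_ le_sup_left
  · rw [← h]
    exact Submodule.mem_sup_right (Submodule.mem_span_singleton_self u)
  · intro a ha b hb
    obtain ⟨x, hx, y, hy, rfl⟩ := Submodule.mem_sup.1 ha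
    obtain ⟨x', hx', y', hy', rfl⟩ := Submodule.mem_sup.1 hb
    obtain ⟨c, rfl⟩ := Submodule.mem_span_singleton.1 hy
    obtain ⟨d, rfl⟩ := Submodule.mem_span_singleton.1 hy'
    have h1 := hL.1 x hx x' hx'
    have h2 := hu x hx
    have h3 := hu x' hx'
    simp only [diracPairing, Prod.fst_add, Prod.snd_add, Prod.smul_fst, Prod.smul_snd,
      map_add, map_smul, LinearMap.add_apply, LinearMap.smul_apply, smul_eq_mul] at *
    linear_combination h1 + (1/2) * d * h2 + (1/2) * c * h3 + c * d * h0

theorem dirac_perp_mem_s11 (L : Submodule ℝ (V × Module.Dual ℝ V)) (hL : IsDirac L)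
    (u : V × Module.Dual ℝ V)
    (hu : ∀ z ∈ L, u.2 z.1 + z.2 u.1 = 0) : u ∈ L := by
  have hann : ∀ ξ : Module.Dual ℝ V, (∀ z ∈ L, ξ z.1 = 0) → ((0 : V), ξ) ∈ L := by
    intro ξ hξ
    apply dirac_null_mem L hL
    · simp
    · intro z hz
      simpa using hξ z hz
  have hY : u.1 ∈ L.map (LinearMap.fst ℝ V (Module.Dual ℝ V)) := by
    by_contra hn
    obtain ⟨f, hf, hf'⟩ := Submodule.exists_le_ker_of_notMem hn
    have h1 := hu _ (hann f (fun z hz => hf' (Submodule.mem_map_of_mem hz)))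
    simp at h1
    exact hf h1
  obtain ⟨w, hw, hwu⟩ := hY
  simp only [LinearMap.fst_apply] at hwu
  have h2 := hann (u.2 - w.2) (by
    intro z hz
    have h3 := hL.1 w hw z hz
    have h4 := hu z hz
    simp only [diracPairing, LinearMap.sub_apply] at *
    rw [← hwu] at h4
    linarith)
  have h5 : u = w + (0, u.2 - w.2) := by
    ext1 <;> simp [hwu]
  rw [h5]
  exact L.add_mem hw h2

/-- For a linear functional `β` on a linear Dirac structure `L ⊆ V ⊕ V*`:
(a) there exists an isotropic element `A ⊕ α ∈ V ⊕ V*` (i.e. `α(A) = 0`) with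
`β(X⊕ξ) = α(X) + ξ(A)` for all `X⊕ξ ∈ L`; (b) given one such `A ⊕ α`, an element
`A′ ⊕ α′` satisfies the same two conditions iff `A′ ⊕ α′ = A ⊕ α + Y ⊕ η` for some
`Y ⊕ η ∈ L` with `β(Y ⊕ η) = 0`. -/
theorem dirac_functional_representation (L : Submodule ℝ (V × Module.Dual ℝ V))
    (hL : IsDirac L) (β : L →ₗ[ℝ] ℝ) :
    (∃ (A : V) (α : Module.Dual ℝ V), α A = 0 ∧
        ∀ z : L, β z = α (z : V × Module.Dual ℝ V).1 + (z : V × Module.Dual ℝ V).2 A) ∧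
    ∀ (A : V) (α : Module.Dual ℝ V),
      (α A = 0 ∧ ∀ z : L, β z = α (z : V × Module.Dual ℝ V).1 + (z : V × Module.Dual ℝ V).2 A) →
      ∀ (A' : V) (α' : Module.Dual ℝ V),
        (α' A' = 0 ∧
            ∀ z : L, β z = α' (z : V × Module.Dual ℝ V).1 + (z : V × Module.Dual ℝ V).2 A') ↔
        ∃ (Y : V) (η : Module.Dual ℝ V) (h : (Y, η) ∈ L),
          β ⟨(Y, η), h⟩ = 0 ∧ A' = A + Y ∧ α' = α + η := by
  have hnull : ∀ z ∈ L, z.2 z.1 = 0 := by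
    intro z hz
    have := hL.1 z hz z hz
    simp only [diracPairing] at this
    linarith
  constructor
  · by_cases hβ : β = 0
    · exact ⟨0, 0, by simp, by simp [hβ]⟩
    obtain ⟨y, hy⟩ : ∃ y, β y ≠ 0 := by
      by_contra! h
      exact hβ (LinearMap.ext h)
    obtain ⟨f, hf⟩ := LinearMap.exists_extend β
    obtain ⟨A, hA⟩ := (Module.evalEquiv ℝ V).surjective
      (f ∘ₗ LinearMap.inr ℝ V (Module.Dual ℝ V))
    set α : Module.Dual ℝ V := f ∘ₗ LinearMap.inl ℝ V (Module.Dual ℝ V) with hα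
    have hrep : ∀ z : L, β z = α (z : V × Module.Dual ℝ V).1 + (z : V × Module.Dual ℝ V).2 A := by
      intro z
      have h1 := LinearMap.congr_fun hA (z : V × Module.Dual ℝ V).2
      simp at h1
      rw [h1, hα, ← hf]
      simp [← map_add]
    have hz := hrep y
    have hn := hnull y y.2
    set c : ℝ := -(α A) / β y with hc
    have hcy : c * β y = -(α A) := by rw [hc]; field_simp
    refine ⟨A + c • y.1.1, α + c • y.1.2, ?_, ?_⟩
    · simp only [map_add, map_smul, LinearMap.add_apply, LinearMap.smul_apply, smul_eq_mul]
      linear_combination hcy - c * hz + c * c * hn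
    · intro z
      have h1 := hrep z
      have h2 := hL.1 y y.2 z z.2
      simp only [diracPairing] at h2
      simp only [map_add, map_smul, LinearMap.add_apply, LinearMap.smul_apply, smul_eq_mul]
      linear_combination h1 - 2 * c * h2
  · rintro A α ⟨h0, hr⟩ A' α'
    constructor
    · rintro ⟨h0', hr'⟩
      have hm : (A' - A, α' - α) ∈ L := by
        apply dirac_perp_mem_s11 L hL
        intro z hz
        have h1 := hr ⟨z, hz⟩
        have h2 := hr' ⟨z, hz⟩
        simp only [LinearMap.sub_apply, map_sub] at *
        linarith
      refine ⟨A' - A, α' - α, hm, ?_, by simp, by simp⟩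
      have h1 := hr ⟨_, hm⟩
      have h2 := hr' ⟨_, hm⟩
      have h3 := hnull _ hm
      simp only [LinearMap.sub_apply, map_sub] at *
      linarith
    · rintro ⟨Y, η, h, hb, rfl, rfl⟩
      have h1 := hr ⟨_, h⟩
      have h3 := hnull _ h
      rw [hb] at h1
      simp only [] at h1 h3
      constructor
      · simp only [map_add, LinearMap.add_apply]
        linarith
      · intro z
        have h2 := hL.1 _ h z z.2
        simp only [diracPairing] at h2
        simp only [map_add, LinearMap.add_apply]
        linarith [hr z]
end
end

section
/- Let L be a linear Dirac structure on a finite-dimensional real vector space V, and let A ⊕ α ∈ V ⊕ V* satisfy α(A) = 0; set β(X⊕ξ) := α(X) + ξ(A) for X ⊕ ξ ∈ L. Let W = V × ℝ and identify W* with V* × ℝ (so (ξ, c) acts on (X, t) by ξ(X) + ct). Then the subspace L̄ of (W × ℝ) ⊕ (W* × ℝ) spanned by the three families {((X, β(X⊕ξ)), 0) ⊕ ((ξ, 0), 0) : X ⊕ ξ ∈ L}, {((0, −1), 0) ⊕ ((0, 0), 1)}, and {((−A, 0), 1) ⊕ ((−α, 1), 0)} is a linear Dirac-Jacobi structure on W;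 in particular it is maximal isotropic of dimension dim V + 2. -/
noncomputable section

open Module

variable {V : Type} [AddCommGroup V] [Module ℝ V] [FiniteDimensional ℝ V]

/-- The identification of `V* × ℝ` with the dual of `W = V × ℝ`:
`(ξ, c)` acts on `(X, t)` by `ξ(X) + c·t`. -/
def dualPair (ξ : Module.Dual ℝ V) (c : ℝ) : Module.Dual ℝ (V × ℝ) :=
  ξ.comp (LinearMap.fst ℝ V ℝ) + c • LinearMap.snd ℝ V ℝ

/-- The subspace of `(W × ℝ) ⊕ (W* × ℝ)`, `W = V × ℝ`, spanned by the three families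
`{((X, β(X⊕ξ)), 0) ⊕ ((ξ, 0), 0) : X⊕ξ ∈ L}` (with `β(X⊕ξ) = α(X) + ξ(A)`),
`((0, −1), 0) ⊕ ((0, 0), 1)`, and `((−A, 0), 1) ⊕ ((−α, 1), 0)`. -/
def preqSpan (L : Submodule ℝ (V × Module.Dual ℝ V)) (A : V) (α : Module.Dual ℝ V) :
    Submodule ℝ ((((V × ℝ) × ℝ)) × (Module.Dual ℝ (V × ℝ) × ℝ)) :=
  Submodule.span ℝ
    ({z | ∃ (X : V) (ξ : Module.Dual ℝ V), (X, ξ) ∈ L ∧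
        z = (((X, α X + ξ A), 0), (dualPair ξ 0, 0))} ∪
      {((((0 : V), (-1 : ℝ)), (0 : ℝ)), ((0 : Module.Dual ℝ (V × ℝ)), (1 : ℝ))),
        (((-A, (0 : ℝ)), (1 : ℝ)), (dualPair (-α) 1, (0 : ℝ)))})

theorem dualPair_apply' (ξ : Module.Dual ℝ V) (c : ℝ) (x : V × ℝ) :
    dualPair ξ c x = ξ x.1 + c * x.2 := by
  simp [dualPair]

/-- Explicit form of a member of the span. -/
def preqEl (A : V) (α : Module.Dual ℝ V) (p : V × Module.Dual ℝ V) (s t : ℝ) :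
    (((V × ℝ) × ℝ)) × (Module.Dual ℝ (V × ℝ) × ℝ) :=
  (((p.1 - t • A, α p.1 + p.2 A - s), t), (dualPair (p.2 - t • α) t, s))

/-- Parametrization of the span. -/
def preqMap (L : Submodule ℝ (V × Module.Dual ℝ V)) (A : V) (α : Module.Dual ℝ V) :
    (L × (ℝ × ℝ)) →ₗ[ℝ] (((V × ℝ) × ℝ)) × (Module.Dual ℝ (V × ℝ) × ℝ) where
  toFun q := preqEl A α q.1 q.2.1 q.2.2
  map_add' p q := by
    simp only [preqEl, Prod.ext_iff]
    refine ⟨⟨⟨?_, ?_⟩, ?_⟩, ?_, ?_⟩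
    · simp; module
    · simp; ring
    · simp
    · refine LinearMap.ext fun x => ?_
      simp [dualPair_apply']; ring
    · simp
  map_smul' c q := by
    simp only [preqEl, Prod.ext_iff]
    refine ⟨⟨⟨?_, ?_⟩, ?_⟩, ?_, ?_⟩
    · simp; module
    · simp; ring
    · simp
    · refine LinearMap.ext fun x => ?_
      simp [dualPair_apply']; ring
    · simp

theorem preqMap_apply (L : Submodule ℝ (V × Module.Dual ℝ V)) (A : V) (α : Module.Dual ℝ V)
    (q : L × (ℝ × ℝ)) : preqMap L A α q = preqEl A α q.1 q.2.1 q.2.2 := rfl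

theorem preqMap_range (L : Submodule ℝ (V × Module.Dual ℝ V)) (A : V) (α : Module.Dual ℝ V) :
    LinearMap.range (preqMap L A α) = preqSpan L A α := by
  apply le_antisymm
  · rintro _ ⟨⟨⟨⟨X, ξ⟩, hp⟩, s, t⟩, rfl⟩
    have h1 : ((((X, α X + ξ A), 0), (dualPair ξ 0, 0)) :
        (((V × ℝ) × ℝ)) × (Module.Dual ℝ (V × ℝ) × ℝ)) ∈ preqSpan L A α :=
      Submodule.subset_span (Or.inl ⟨X, ξ, hp, rfl⟩)
    have h2 : ((((0 : V), (-1 : ℝ)), (0 : ℝ)), ((0 : Module.Dual ℝ (V × ℝ)), (1 : ℝ)))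
        ∈ preqSpan L A α := Submodule.subset_span (Or.inr (Or.inl rfl))
    have h3 : (((-A, (0 : ℝ)), (1 : ℝ)), (dualPair (-α) 1, (0 : ℝ)))
        ∈ preqSpan L A α := Submodule.subset_span (Or.inr (Or.inr rfl))
    have h := add_mem (add_mem h1 (Submodule.smul_mem _ s h2)) (Submodule.smul_mem _ t h3)
    convert h using 1
    rw [preqMap_apply]
    simp only [preqEl, Prod.ext_iff]
    refine ⟨⟨⟨?_, ?_⟩, ?_⟩, ?_, ?_⟩
    · simp; module
    · simp; ring
    · simp
    · refine LinearMap.ext fun x => ?_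
      simp [dualPair_apply']; ring
    · simp
  · refine Submodule.span_le.2 ?_
    rintro z (⟨X, ξ, hp, rfl⟩ | rfl | rfl)
    · refine ⟨(⟨(X, ξ), hp⟩, 0, 0), ?_⟩
      simp [preqMap_apply, preqEl]
    · refine ⟨(0, 1, 0), ?_⟩
      simp [preqMap_apply, preqEl, dualPair]
    · refine ⟨(0, 0, 1), ?_⟩
      simp [preqMap_apply, preqEl]

theorem preqMap_inj (L : Submodule ℝ (V × Module.Dual ℝ V)) (A : V) (α : Module.Dual ℝ V) :
    Function.Injective (preqMap L A α) := by
  rw [injective_iff_map_eq_zero]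
  rintro ⟨⟨⟨X, ξ⟩, hp⟩, s, t⟩ h
  simp only [preqMap_apply, preqEl, Prod.ext_iff] at h
  obtain ⟨⟨⟨h1, h2⟩, h3⟩, h4, h5⟩ := h
  have h3 : t = 0 := h3
  have h5 : s = 0 := h5
  subst h3 h5
  have hX : X = 0 := by simpa using h1
  have hξ : ξ = 0 := by
    refine LinearMap.ext fun x => ?_
    have := LinearMap.congr_fun h4 (x, 0)
    simpa [dualPair_apply'] using this
  subst hX hξ
  rfl

/-- A null vector orthogonal to a Dirac structure lies in it. -/
theorem dirac_mem (L : Submodule ℝ (V × Module.Dual ℝ V)) (hL : IsDirac L)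
    (z : V × Module.Dual ℝ V) (hz : z.2 z.1 = 0)
    (h : ∀ a ∈ L, a.2 z.1 + z.2 a.1 = 0) : z ∈ L := by
  have key : L ⊔ Submodule.span ℝ {z} = L := by
    refine hL.2 _ ?_ le_sup_left
    intro a₀ ha₀ b₀ hb₀
    obtain ⟨a, ha, _, ha', rfl⟩ := Submodule.mem_sup.1 ha₀
    obtain ⟨b, hb, _, hb', rfl⟩ := Submodule.mem_sup.1 hb₀
    obtain ⟨c, rfl⟩ := Submodule.mem_span_singleton.1 ha'
    obtain ⟨d, rfl⟩ := Submodule.mem_span_singleton.1 hb'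
    have h0 := hL.1 a ha b hb
    have h1 := h a ha
    have h2 := h b hb
    simp [diracPairing] at h0 ⊢
    linear_combination h0 + d * h1 + c * h2 + 2 * c * d * hz
  rw [← key]
  exact Submodule.mem_sup_right (Submodule.mem_span_singleton_self z)

theorem dirac_finrank (L : Submodule ℝ (V × Module.Dual ℝ V)) (hL : IsDirac L) :
    Module.finrank ℝ L = Module.finrank ℝ V := by
  set f : L →ₗ[ℝ] V := (LinearMap.fst ℝ V (Module.Dual ℝ V)).comp L.subtype with hf
  have h1 := LinearMap.finrank_range_add_finrank_ker (K := ℝ) (V := L) (V₂ := V) f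
  have h2 := Subspace.finrank_add_finrank_dualAnnihilator_eq (LinearMap.range f)
  have e : (LinearMap.range f).dualAnnihilator ≃ₗ[ℝ] LinearMap.ker f := by
    have hm : ∀ η : (LinearMap.range f).dualAnnihilator,
        (((0 : V), η.1) : V × Module.Dual ℝ V) ∈ L := by
      intro η
      refine dirac_mem L hL _ (by simp) fun a ha => ?_
      have := (Submodule.mem_dualAnnihilator _).1 η.2 a.1 ⟨⟨a, ha⟩, rfl⟩
      simpa using this
    let g : (LinearMap.range f).dualAnnihilator →ₗ[ℝ] LinearMap.ker f :=
      { toFun := fun η => ⟨⟨(0, η.1), hm η⟩, rfl⟩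
        map_add' := by
          intro x y
          exact Subtype.ext (Subtype.ext (by simp))
        map_smul' := by
          intro x y
          exact Subtype.ext (Subtype.ext (by simp)) }
    refine LinearEquiv.ofBijective g ⟨?_, ?_⟩
    · intro x y hxy
      exact Subtype.ext (congrArg (fun z => z.1.1.2) hxy)
    · rintro ⟨⟨⟨X, ξ⟩, hp⟩, hk⟩
      have hX : X = 0 := hk
      subst hX
      refine ⟨⟨ξ, ?_⟩, rfl⟩
      rw [Submodule.mem_dualAnnihilator]
      rintro _ ⟨⟨a, ha⟩, rfl⟩
      have := hL.1 _ hp _ ha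
      have h' : ξ a.1 = 0 := by simpa [diracPairing] using this
      exact h'
  have h3 := e.finrank_eq
  omega

/-- Pointwise prequantization: for a linear Dirac structure `L` on `V` and an
isotropic element `A ⊕ α` (`α(A) = 0`), the subspace `preqSpan L A α` of
`(W × ℝ) ⊕ (W* × ℝ)`, `W = V × ℝ`, is a linear Dirac-Jacobi structure on `W`; in
particular it is maximal isotropic of dimension `dim V + 2`. -/
theorem preq_span_is_dirac_jacobi (L : Submodule ℝ (V × Module.Dual ℝ V)) (hL : IsDirac L)
    (A : V) (α : Module.Dual ℝ V) (hα : α A = 0) :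
    IsDiracJacobi (preqSpan L A α) ∧
      Module.finrank ℝ (preqSpan L A α) = Module.finrank ℝ V + 2 := by
  have mem : ∀ z, z ∈ preqSpan L A α ↔ ∃ p ∈ L, ∃ s t, preqEl A α p s t = z := by
    intro z
    rw [← preqMap_range]
    constructor
    · rintro ⟨⟨⟨p, hp⟩, s, t⟩, rfl⟩
      exact ⟨p, hp, s, t, rfl⟩
    · rintro ⟨p, hp, s, t, rfl⟩
      exact ⟨(⟨p, hp⟩, s, t), rfl⟩
  refine ⟨⟨?_, ?_⟩, ?_⟩
  · intro a ha b hb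
    obtain ⟨p, hp, s, t, rfl⟩ := (mem a).1 ha
    obtain ⟨q, hq, u, v, rfl⟩ := (mem b).1 hb
    have h0 := hL.1 p hp q hq
    simp [diracPairing] at h0
    simp [djPairing, preqEl, dualPair_apply', hα]
    linear_combination h0
  · intro L' hL' hle
    refine le_antisymm ?_ hle
    rintro ⟨⟨⟨Y, t⟩, f⟩, ⟨θ, g⟩⟩ hz
    obtain ⟨η, c, rfl⟩ : ∃ η c, θ = dualPair η c := by
      refine ⟨θ.comp (LinearMap.inl ℝ V ℝ), θ (0, 1), LinearMap.ext fun x => ?_⟩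
      rw [dualPair_apply', mul_comm, ← smul_eq_mul, ← map_smul]
      simp [← map_add]
    have orth : ∀ p ∈ L, ∀ s u, djPairing (preqEl A α p s u)
        (((Y, t), f), (dualPair η c, g)) = 0 := fun p hp s u =>
      hL' _ (hle ((mem _).2 ⟨p, hp, s, u, rfl⟩)) _ hz
    have h1 := orth 0 L.zero_mem 1 0
    have h2 := orth 0 L.zero_mem 0 1
    have h4 := hL' _ hz _ hz
    simp [djPairing, preqEl, dualPair_apply'] at h1 h2 h4
    have hfc : f = c := by linarith
    subst hfc
    refine (mem _).2 ⟨(Y + f • A, η + f • α), ?_, g, f, ?_⟩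
    · refine dirac_mem L hL _ ?_ ?_
      · simp [hα]
        linear_combination h4 / 2 - f * h2
      · intro a ha
        have h3 := orth a ha 0 0
        simp [djPairing, preqEl, dualPair_apply'] at h3
        simp
        linear_combination h3
    · simp [preqEl, hα]
      linarith
  · rw [← preqMap_range, LinearMap.finrank_range_of_inj (preqMap_inj L A α)]
    haveI : Module.Free ℝ L := Module.Free.of_divisionRing ℝ L
    rw [Module.finrank_prod, Module.finrank_prod, dirac_finrank L hL, Module.finrank_self]
end
end

section
/- Let L be a linear Dirac structure on a finite-dimensional real vector space V, and let A ⊕ α and A′ ⊕ α′ be elements of V ⊕ V* with α(A) = 0 and α′(A′) = 0 such that α(X) + ξ(A) = α′(X) + ξ(A′) for all X ⊕ ξ ∈ L. Then, with W = V × ℝ and W* identified with V* × ℝ, the subspace of (W × ℝ) ⊕ (W* × ℝ) spanned by {((X, α(X)+ξ(A)), 0) ⊕ ((ξ, 0), 0) : X ⊕ ξ ∈ L}, ((0, −1), 0) ⊕ ((0, 0), 1), and ((−A, 0), 1) ⊕ ((−α, 1), 0) coincides with the subspace spanned by {((X, α′(X)+ξ(A′)), 0) ⊕ ((ξ, 0),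 0) : X ⊕ ξ ∈ L}, ((0, −1), 0) ⊕ ((0, 0), 1), and ((−A′, 0), 1) ⊕ ((−α′, 1), 0); i.e. the constructed subspace is independent of the choice of A ⊕ α. -/
noncomputable section

open Module

variable {V : Type} [AddCommGroup V] [Module ℝ V] [FiniteDimensional ℝ V]

theorem mem_of_orth (L : Submodule ℝ (V × Module.Dual ℝ V))
    (hL : IsDirac L) (B : V) (b : Module.Dual ℝ V) (hq : b B = 0)
    (h : ∀ (X : V) (ξ : Module.Dual ℝ V), (X, ξ) ∈ L → b X + ξ B = 0) : (B, b) ∈ L := by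
  have hiso : IsIsotropic (L ⊔ Submodule.span ℝ {(B, b)}) := by
    intro x hx y hy
    obtain ⟨l, hl, m, hm, rfl⟩ := Submodule.mem_sup.1 hx
    obtain ⟨l', hl', m', hm', rfl⟩ := Submodule.mem_sup.1 hy
    obtain ⟨c, rfl⟩ := Submodule.mem_span_singleton.1 hm
    obtain ⟨c', rfl⟩ := Submodule.mem_span_singleton.1 hm'
    have h1 := hL.1 l hl l' hl'
    have h2 := h l.1 l.2 hl
    have h3 := h l'.1 l'.2 hl'
    simp only [diracPairing] at h1
    simp only [diracPairing, Prod.fst_add, Prod.snd_add, Prod.smul_fst, Prod.smul_snd,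
      LinearMap.add_apply, LinearMap.smul_apply, map_add, map_smul, smul_eq_mul, hq]
    linear_combination h1 + (1/2) * c' * h2 + (1/2) * c * h3
  have := hL.2 _ hiso le_sup_left
  rw [← this]
  exact Submodule.mem_sup_right (Submodule.mem_span_singleton_self _)

theorem mem_of_orth' (L : Submodule ℝ (V × Module.Dual ℝ V))
    (hL : IsDirac L) (B : V) (b : Module.Dual ℝ V)
    (h : ∀ (X : V) (ξ : Module.Dual ℝ V), (X, ξ) ∈ L → b X + ξ B = 0) : (B, b) ∈ L := by
  have hB : B ∈ L.map (LinearMap.fst ℝ V (Module.Dual ℝ V)) := by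
    by_contra hB
    obtain ⟨f, hf, hf'⟩ := Submodule.exists_le_ker_of_notMem hB
    have : ((0 : V), f) ∈ L := by
      apply mem_of_orth L hL 0 f (map_zero f)
      intro X ξ hX
      have : f X = 0 := hf' ⟨(X, ξ), hX, rfl⟩
      simp [this]
    have := h _ _ this
    simp at this
    exact hf this
  obtain ⟨⟨B', η⟩, hη, rfl⟩ := hB
  simp only [LinearMap.fst_apply] at *
  have h0 : ((0 : V), b - η) ∈ L := by
    apply mem_of_orth L hL 0 _ (map_zero _)
    intro X ξ hX
    have h1 := h X ξ hX
    have h2 := hL.1 _ hη _ hX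
    simp only [diracPairing] at h2
    simp only [LinearMap.sub_apply, map_zero]
    linarith
  have := L.add_mem hη h0
  simpa using this

theorem preqSpan_le (L : Submodule ℝ (V × Module.Dual ℝ V))
    (hL : IsDirac L) (A A' : V) (α α' : Module.Dual ℝ V)
    (hα : α A = 0) (hα' : α' A' = 0)
    (hβ : ∀ (X : V) (ξ : Module.Dual ℝ V), (X, ξ) ∈ L → α X + ξ A = α' X + ξ A') :
    preqSpan L A α ≤ preqSpan L A' α' := by
  have hD : (A' - A, α' - α) ∈ L := by
    apply mem_of_orth' L hL
    intro X ξ hX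
    have := hβ X ξ hX
    simp only [LinearMap.sub_apply, map_sub]
    linarith
  have h0 := hβ _ _ hD
  simp only [LinearMap.sub_apply, map_sub] at h0
  refine Submodule.span_le.2 ?_
  rintro z (⟨X, ξ, hX, rfl⟩ | rfl | rfl)
  · exact Submodule.subset_span (Or.inl ⟨X, ξ, hX, by rw [hβ X ξ hX]⟩)
  · exact Submodule.subset_span (Or.inr (Or.inl rfl))
  · have e1 : (((-A', (0 : ℝ)), (1 : ℝ)), (dualPair (-α') 1, (0 : ℝ))) ∈ preqSpan L A' α' :=
      Submodule.subset_span (Or.inr (Or.inr rfl))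
    have e2 : (((A' - A, α' (A' - A) + (α' - α) A'), (0 : ℝ)), (dualPair (α' - α) 0, (0 : ℝ)))
        ∈ preqSpan L A' α' :=
      Submodule.subset_span (Or.inl ⟨_, _, hD, rfl⟩)
    have e := Submodule.add_mem _ e1 e2
    have hz : α' (A' - A) + (α' - α) A' = 0 := by
      simp only [LinearMap.sub_apply, map_sub]
      linarith
    have hd : dualPair (-α') 1 + dualPair (α' - α) 0 = dualPair (-α) 1 := by
      ext <;> simp [dualPair] <;> ring
    rw [hz, Prod.mk_add_mk, Prod.mk_add_mk, Prod.mk_add_mk, Prod.mk_add_mk, hd] at e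
    have ha : -A' + (A' - A) = -A := by abel
    simpa [ha] using e

/-- The prequantization subspace is independent of the choice of the isotropic
element `A ⊕ α` representing the functional `β`: if `α(A) = 0`, `α′(A′) = 0` and
`α(X) + ξ(A) = α′(X) + ξ(A′)` for all `X ⊕ ξ ∈ L`, the two spanned subspaces coincide. -/
theorem preq_span_independent_of_choice (L : Submodule ℝ (V × Module.Dual ℝ V))
    (hL : IsDirac L) (A A' : V) (α α' : Module.Dual ℝ V)
    (hα : α A = 0) (hα' : α' A' = 0)
    (hβ : ∀ (X : V) (ξ : Module.Dual ℝ V), (X, ξ) ∈ L → α X + ξ A = α' X + ξ A') :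
    preqSpan L A α = preqSpan L A' α' := by
  exact le_antisymm (preqSpan_le L hL A A' α α' hα hα' hβ)
    (preqSpan_le L hL A' A α' α hα' hα fun X ξ h => (hβ X ξ h).symm)
end
end

section
/- Fix n ≥ 1 and let M = ℝ × (Fin n → ℝ) × (Fin n → ℝ) × ℝ with points written x = (u, q, p, r). For smooth functions f, g : M → ℝ define {f, g} : M → ℝ by {f, g}(x) = r²(∂_r f · ∂_u g − ∂_u f · ∂_r g)(x) + r·Σᵢ pᵢ(∂_{pᵢ} f · ∂_u g − ∂_u f · ∂_{pᵢ} g)(x) + r·Σᵢ(∂_{qᵢ} f · ∂_{pᵢ} g − ∂_{pᵢ} f · ∂_{qᵢ} g)(x), where r and pᵢ denote the corresponding coordinates of x and ∂ denotes the partial (directional) derivative in the indicated coordinate direction. Then for all smooth f, g, h : M → ℝ the Jacobi identity {f, {g, h}} + {g, {h, f}} + {h, {f, g}} = 0 holds at every point of M. (Equivalently, the bivector field Λ = r[(r∂_r + Σᵢ pᵢ∂_{pᵢ}) ∧ ∂_u + Σᵢ ∂_{qᵢ} ∧ ∂_{pᵢ}], the LeBrun-Poisson structure associated to the standard contact structure,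 is a Poisson structure on all of M, including the locus r = 0.) -/
noncomputable section

open scoped BigOperators

/-- The manifold `M = ℝ × (Fin n → ℝ) × (Fin n → ℝ) × ℝ`, with points `x = (u, q, p, r)`. -/
abbrev LPSpace (n : ℕ) : Type := ℝ × (Fin n → ℝ) × (Fin n → ℝ) × ℝ

/-- The coordinate direction `∂/∂u`. -/
def eU (n : ℕ) : LPSpace n := (1, 0, 0, 0)

/-- The coordinate direction `∂/∂qᵢ`. -/
def eQ (n : ℕ) (i : Fin n) : LPSpace n := (0, Pi.single i 1, 0, 0)

/-- The coordinate direction `∂/∂pᵢ`. -/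
def eP (n : ℕ) (i : Fin n) : LPSpace n := (0, 0, Pi.single i 1, 0)

/-- The coordinate direction `∂/∂r`. -/
def eR (n : ℕ) : LPSpace n := (0, 0, 0, 1)

/-- The partial derivative of `f` at `x` in the direction `v`. -/
def pd {n : ℕ} (f : LPSpace n → ℝ) (x v : LPSpace n) : ℝ := fderiv ℝ f x v

/-- The LeBrun-Poisson bracket
`{f, g} = r²(∂_r f ∂_u g − ∂_u f ∂_r g) + r Σᵢ pᵢ(∂_{pᵢ} f ∂_u g − ∂_u f ∂_{pᵢ} g)
  + r Σᵢ (∂_{qᵢ} f ∂_{pᵢ} g − ∂_{pᵢ} f ∂_{qᵢ} g)`,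
the pairing of `df` and `dg` by the bivector
`Λ = r[(r∂_r + Σᵢ pᵢ ∂_{pᵢ}) ∧ ∂_u + Σᵢ ∂_{qᵢ} ∧ ∂_{pᵢ}]`. -/
def lpBracket {n : ℕ} (f g : LPSpace n → ℝ) (x : LPSpace n) : ℝ :=
  x.2.2.2 ^ 2 * (pd f x (eR n) * pd g x (eU n) - pd f x (eU n) * pd g x (eR n)) +
    x.2.2.2 * ∑ i : Fin n, x.2.2.1 i *
      (pd f x (eP n i) * pd g x (eU n) - pd f x (eU n) * pd g x (eP n i)) +
    x.2.2.2 * ∑ i : Fin n,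
      (pd f x (eQ n i) * pd g x (eP n i) - pd f x (eP n i) * pd g x (eQ n i))

/-- Derivation along a vector field. -/
def vd {n : ℕ} (V : LPSpace n → LPSpace n) (f : LPSpace n → ℝ) (x : LPSpace n) : ℝ :=
  fderiv ℝ f x (V x)

/-- First family of fields. -/
def fA (n : ℕ) : Option (Fin n) → LPSpace n → LPSpace n
  | none => fun x => (0, 0, x.2.2.2 • x.2.2.1, x.2.2.2 ^ 2)
  | some i => fun _ => eQ n i

/-- Second family of fields. -/
def fB (n : ℕ) : Option (Fin n) → LPSpace n → LPSpace n
  | none => fun _ => eU n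
  | some i => fun x => x.2.2.2 • eP n i

lemma fA_smooth (n : ℕ) (a : Option (Fin n)) : ContDiff ℝ (⊤ : ℕ∞) (fA n a) := by
  cases a <;> simp only [fA] <;> fun_prop

lemma fB_smooth (n : ℕ) (a : Option (Fin n)) : ContDiff ℝ (⊤ : ℕ∞) (fB n a) := by
  cases a <;> simp only [fB] <;> fun_prop

lemma vd_smooth {n : ℕ} {V : LPSpace n → LPSpace n} {f : LPSpace n → ℝ}
    (hV : ContDiff ℝ (⊤ : ℕ∞) V) (hf : ContDiff ℝ (⊤ : ℕ∞) f) :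
    ContDiff ℝ (⊤ : ℕ∞) (vd V f) := by
  unfold vd
  exact (hf.fderiv_right (m := (⊤ : ℕ∞)) (by simp)).clm_apply hV

lemma vd_comm {n : ℕ} {V W : LPSpace n → LPSpace n} {f : LPSpace n → ℝ}
    (hV : ContDiff ℝ (⊤ : ℕ∞) V) (hW : ContDiff ℝ (⊤ : ℕ∞) W) (hf : ContDiff ℝ (⊤ : ℕ∞) f)
    (x : LPSpace n) (hc : fderiv ℝ W x (V x) = fderiv ℝ V x (W x)) :
    vd V (vd W f) x = vd W (vd V f) x := by
  have hd : DifferentiableAt ℝ (fderiv ℝ f) x :=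
    ((hf.fderiv_right (m := (⊤ : ℕ∞)) (by simp)).differentiable (by simp)) x
  have hVd : DifferentiableAt ℝ V x := hV.differentiable (by simp) x
  have hWd : DifferentiableAt ℝ W x := hW.differentiable (by simp) x
  have hs : IsSymmSndFDerivAt ℝ f x :=
    hf.contDiffAt.isSymmSndFDerivAt (by simp only [minSmoothness_of_isRCLikeNormedField]; exact WithTop.coe_le_coe.2 (le_top : (2 : ℕ∞) ≤ ⊤))
  unfold vd
  rw [fderiv_clm_apply hd hWd, fderiv_clm_apply hd hVd]
  simp only [ContinuousLinearMap.add_apply, ContinuousLinearMap.comp_apply,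
    ContinuousLinearMap.flip_apply, hc]
  rw [hs.eq]

lemma fderiv_fA_none (n : ℕ) (x v : LPSpace n) :
    fderiv ℝ (fA n none) x v =
      (0, 0, x.2.2.2 • v.2.2.1 + v.2.2.2 • x.2.2.1, 2 * x.2.2.2 * v.2.2.2) := by
  have hr : HasFDerivAt (fun x : LPSpace n => x.2.2.2) _ x :=
    ((ContinuousLinearMap.snd ℝ (Fin n → ℝ) ℝ).comp ((ContinuousLinearMap.snd ℝ (Fin n → ℝ)
      ((Fin n → ℝ) × ℝ)).comp (ContinuousLinearMap.snd ℝ ℝ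
      ((Fin n → ℝ) × (Fin n → ℝ) × ℝ)))).hasFDerivAt
  have hp : HasFDerivAt (fun x : LPSpace n => x.2.2.1) _ x :=
    ((ContinuousLinearMap.fst ℝ (Fin n → ℝ) ℝ).comp ((ContinuousLinearMap.snd ℝ (Fin n → ℝ)
      ((Fin n → ℝ) × ℝ)).comp (ContinuousLinearMap.snd ℝ ℝ
      ((Fin n → ℝ) × (Fin n → ℝ) × ℝ)))).hasFDerivAt
  have h : HasFDerivAt (fA n none) _ x :=
    (hasFDerivAt_const (0 : ℝ) x).prodMk ((hasFDerivAt_const (0 : Fin n → ℝ) x).prodMk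
      ((hr.smul hp).prodMk (hr.pow 2)))
  rw [h.fderiv]
  simp

lemma fderiv_fB_some (n : ℕ) (i : Fin n) (x v : LPSpace n) :
    fderiv ℝ (fB n (some i)) x v = v.2.2.2 • eP n i := by
  have hr : HasFDerivAt (fun x : LPSpace n => x.2.2.2) _ x :=
    ((ContinuousLinearMap.snd ℝ (Fin n → ℝ) ℝ).comp ((ContinuousLinearMap.snd ℝ (Fin n → ℝ)
      ((Fin n → ℝ) × ℝ)).comp (ContinuousLinearMap.snd ℝ ℝ
      ((Fin n → ℝ) × (Fin n → ℝ) × ℝ)))).hasFDerivAt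
  have h : HasFDerivAt (fB n (some i)) _ x := hr.smul_const (eP n i)
  rw [h.fderiv]
  simp

lemma fderiv_fA_some (n : ℕ) (i : Fin n) (x v : LPSpace n) :
    fderiv ℝ (fA n (some i)) x v = 0 := by
  simp [fA]

lemma fderiv_fB_none (n : ℕ) (x v : LPSpace n) :
    fderiv ℝ (fB n none) x v = 0 := by
  simp [fB]

lemma comm_AA (n : ℕ) (a b : Option (Fin n)) (x : LPSpace n) :
    fderiv ℝ (fA n a) x (fA n b x) = fderiv ℝ (fA n b) x (fA n a x) := by
  cases a <;> cases b <;> simp [fderiv_fA_none, fderiv_fA_some] <;> simp [fA, eQ] <;> rfl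

lemma comm_BB (n : ℕ) (a b : Option (Fin n)) (x : LPSpace n) :
    fderiv ℝ (fB n a) x (fB n b x) = fderiv ℝ (fB n b) x (fB n a x) := by
  cases a <;> cases b <;> simp [fderiv_fB_none, fderiv_fB_some] <;> simp [fB, eU, eP]

lemma comm_AB (n : ℕ) (a b : Option (Fin n)) (x : LPSpace n) :
    fderiv ℝ (fA n a) x (fB n b x) = fderiv ℝ (fB n b) x (fA n a x) := by
  cases a <;> cases b <;>
    simp [fderiv_fB_none, fderiv_fB_some, fderiv_fA_none, fderiv_fA_some] <;>
    simp [fA, fB, eU, eP, eQ, smul_smul, pow_two]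

lemma vd_A_none {n : ℕ} (f : LPSpace n → ℝ) (x : LPSpace n) :
    vd (fA n none) f x = x.2.2.2 ^ 2 * pd f x (eR n) +
      x.2.2.2 * ∑ i : Fin n, x.2.2.1 i * pd f x (eP n i) := by
  have h : fA n none x = x.2.2.2 ^ 2 • eR n + x.2.2.2 • ∑ i : Fin n, x.2.2.1 i • eP n i := by
    have h2 : (∑ i : Fin n, x.2.2.1 i • eP n i) = (0, 0, x.2.2.1, 0) := by
      have h3 := pi_eq_sum_univ' x.2.2.1
      simp only [eP, Prod.smul_mk, smul_zero]
      refine Prod.ext ?_ (Prod.ext ?_ (Prod.ext ?_ ?_))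
      · simp [Prod.fst_sum]
      · simp [Prod.fst_sum, Prod.snd_sum]
      · funext j
        simp [Prod.fst_sum, Prod.snd_sum, Finset.sum_apply, Pi.single_apply]
      · simp [Prod.snd_sum]
    rw [h2]
    simp [fA, eR]
  unfold vd pd
  rw [h]
  simp [map_sum]

lemma lpBracket_eq {n : ℕ} (f g : LPSpace n → ℝ) :
    lpBracket f g = fun x => ∑ a : Option (Fin n),
      (vd (fA n a) f x * vd (fB n a) g x - vd (fB n a) f x * vd (fA n a) g x) := by
  funext x
  have h1 : ∀ (f : LPSpace n → ℝ) i, vd (fA n (some i)) f x = pd f x (eQ n i) := fun _ _ => rfl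
  have h2 : ∀ (f : LPSpace n → ℝ), vd (fB n none) f x = pd f x (eU n) := fun _ => rfl
  have h3 : ∀ (f : LPSpace n → ℝ) i, vd (fB n (some i)) f x = x.2.2.2 * pd f x (eP n i) := by
    intro f i
    simp [vd, fB, pd]
  rw [Fintype.sum_option]
  simp only [h1, h2, h3, vd_A_none, lpBracket]
  have e1 : ∑ i : Fin n, x.2.2.1 i *
      (pd f x (eP n i) * pd g x (eU n) - pd f x (eU n) * pd g x (eP n i)) =
      (∑ i : Fin n, x.2.2.1 i * pd f x (eP n i)) * pd g x (eU n) -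
      pd f x (eU n) * ∑ i : Fin n, x.2.2.1 i * pd g x (eP n i) := by
    rw [Finset.sum_mul, Finset.mul_sum, ← Finset.sum_sub_distrib]
    exact Finset.sum_congr rfl fun i _ => by ring
  have e2 : ∑ i : Fin n, (pd f x (eQ n i) * (x.2.2.2 * pd g x (eP n i)) -
      x.2.2.2 * pd f x (eP n i) * pd g x (eQ n i)) = x.2.2.2 * ∑ i : Fin n,
      (pd f x (eQ n i) * pd g x (eP n i) - pd f x (eP n i) * pd g x (eQ n i)) := by
    rw [Finset.mul_sum]
    exact Finset.sum_congr rfl fun i _ => by ring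
  rw [e1, e2]
  ring

lemma vd_bracket {n : ℕ} (V : LPSpace n → LPSpace n) {g h : LPSpace n → ℝ}
    (hg : ContDiff ℝ (⊤ : ℕ∞) g) (hh : ContDiff ℝ (⊤ : ℕ∞) h) (x : LPSpace n) :
    vd V (lpBracket g h) x = ∑ b : Option (Fin n),
      (vd V (vd (fA n b) g) x * vd (fB n b) h x + vd (fA n b) g x * vd V (vd (fB n b) h) x
      - vd V (vd (fB n b) g) x * vd (fA n b) h x
      - vd (fB n b) g x * vd V (vd (fA n b) h) x) := by
  have dA : ∀ {k : LPSpace n → ℝ} (_ : ContDiff ℝ (⊤ : ℕ∞) k) b,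
      HasFDerivAt (vd (fA n b) k) (fderiv ℝ (vd (fA n b) k) x) x := fun hk b =>
    ((vd_smooth (fA_smooth n b) hk).differentiable (by simp) x).hasFDerivAt
  have dB : ∀ {k : LPSpace n → ℝ} (_ : ContDiff ℝ (⊤ : ℕ∞) k) b,
      HasFDerivAt (vd (fB n b) k) (fderiv ℝ (vd (fB n b) k) x) x := fun hk b =>
    ((vd_smooth (fB_smooth n b) hk).differentiable (by simp) x).hasFDerivAt
  have H := HasFDerivAt.fun_sum (u := Finset.univ) fun b _ =>
    ((dA hg b).mul (dB hh b)).sub ((dB hg b).mul (dA hh b))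
  rw [lpBracket_eq]
  conv_lhs => unfold vd
  erw [H.fderiv]
  rw [ContinuousLinearMap.sum_apply]
  refine Finset.sum_congr rfl fun b _ => ?_
  simp [vd]
  ring

/-- The LeBrun-Poisson bracket satisfies the Jacobi identity at every point
of `M`, including the locus `r = 0`; i.e. the bivector
`Λ = r[(r∂_r + Σᵢ pᵢ∂_{pᵢ}) ∧ ∂_u + Σᵢ ∂_{qᵢ} ∧ ∂_{pᵢ}]` is a Poisson structure on all
of `M`. -/
theorem lpBracket_jacobi_identity (n : ℕ) (hn : 1 ≤ n) (f g h : LPSpace n → ℝ)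
    (hf : ContDiff ℝ (⊤ : ℕ∞) f) (hg : ContDiff ℝ (⊤ : ℕ∞) g) (hh : ContDiff ℝ (⊤ : ℕ∞) h) (x : LPSpace n) :
    lpBracket f (lpBracket g h) x + lpBracket g (lpBracket h f) x +
      lpBracket h (lpBracket f g) x = 0 := by
  have h0 : ∀ {f g h : LPSpace n → ℝ} (_ : ContDiff ℝ (⊤ : ℕ∞) g) (_ : ContDiff ℝ (⊤ : ℕ∞) h),
      lpBracket f (lpBracket g h) x = ∑ a : Option (Fin n), ∑ b : Option (Fin n),
      (vd (fA n a) f x *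
        (vd (fB n a) (vd (fA n b) g) x * vd (fB n b) h x
          + vd (fA n b) g x * vd (fB n a) (vd (fB n b) h) x
          - vd (fB n a) (vd (fB n b) g) x * vd (fA n b) h x
          - vd (fB n b) g x * vd (fB n a) (vd (fA n b) h) x) -
      vd (fB n a) f x *
        (vd (fA n a) (vd (fA n b) g) x * vd (fB n b) h x
          + vd (fA n b) g x * vd (fA n a) (vd (fB n b) h) x
          - vd (fA n a) (vd (fB n b) g) x * vd (fA n b) h x
          - vd (fB n b) g x * vd (fA n a) (vd (fA n b) h) x)) := by
    intro f g h hg hh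
    rw [lpBracket_eq f]
    refine Finset.sum_congr rfl fun a _ => ?_
    rw [vd_bracket _ hg hh, vd_bracket _ hg hh, Finset.mul_sum, Finset.mul_sum,
      ← Finset.sum_sub_distrib]
  rw [h0 hg hh, h0 hh hf, h0 hf hg]
  simp only [← Finset.sum_add_distrib]
  have key : ∀ T : Option (Fin n) → Option (Fin n) → ℝ, (∀ a b, T a b + T b a = 0) →
      ∑ a, ∑ b, T a b = 0 := by
    intro T hT
    have h1 : ∑ a, ∑ b, T a b = ∑ a, ∑ b, T b a := Finset.sum_comm
    have h2 : ∑ a, ∑ b, T a b + ∑ a, ∑ b, T b a = 0 := by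
      simp only [← Finset.sum_add_distrib, hT, Finset.sum_const_zero]
    linarith
  apply key
  intro a b
  have cAA : ∀ {k : LPSpace n → ℝ} (_ : ContDiff ℝ (⊤ : ℕ∞) k),
      vd (fA n b) (vd (fA n a) k) x = vd (fA n a) (vd (fA n b) k) x := fun hk =>
    vd_comm (fA_smooth n b) (fA_smooth n a) hk x (comm_AA n a b x)
  have cBB : ∀ {k : LPSpace n → ℝ} (_ : ContDiff ℝ (⊤ : ℕ∞) k),
      vd (fB n b) (vd (fB n a) k) x = vd (fB n a) (vd (fB n b) k) x := fun hk =>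
    vd_comm (fB_smooth n b) (fB_smooth n a) hk x (comm_BB n a b x)
  have cAB : ∀ {k : LPSpace n → ℝ} (_ : ContDiff ℝ (⊤ : ℕ∞) k) (a b : Option (Fin n)),
      vd (fB n b) (vd (fA n a) k) x = vd (fA n a) (vd (fB n b) k) x := fun hk a b =>
    vd_comm (fB_smooth n b) (fA_smooth n a) hk x (comm_AB n a b x)
  rw [cAA hf, cAA hg, cAA hh, cBB hf, cBB hg, cBB hh]
  simp only [cAB hf, cAB hg, cAB hh]
  ring
end
end

section
/- Fix n ≥ 0 and let M = ℝ × (Fin n → ℝ) × (Fin n → ℝ) × ℝ with points x = (u, q, p, s), and let ω_x be the skew bilinear form ω_x(v, w) = v_s σ_x(w) − w_s σ_x(v) + s Σᵢ((v_p)ᵢ (w_q)ᵢ − (v_q)ᵢ (w_p)ᵢ), where σ_x(v) = v_u + Σᵢ pᵢ (v_q)ᵢ. Let f : M → ℝ be a smooth function which is constant on the hypersurface {s = 0} (i.e. there is c ∈ ℝ with f(x) = c whenever x_s = 0). Then f is admissible: there exists a smooth vector field X : M → ℝ × (Fin n → ℝ) × (Fin n → ℝ) × ℝ such that ω_x(X(x),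 v) = df_x(v) for every x ∈ M and every vector v. -/
noncomputable section

open scoped BigOperators

/-- The manifold `M = ℝ × (Fin n → ℝ) × (Fin n → ℝ) × ℝ`, with points `x = (u, q, p, s)`
and tangent vectors `v = (v_u, v_q, v_p, v_s)`. -/
abbrev CSpace (n : ℕ) : Type := ℝ × (Fin n → ℝ) × (Fin n → ℝ) × ℝ

/-- The contact form `σ = du + Σᵢ pᵢ dqᵢ` evaluated at the point `x` on the vector `v`:
`σ_x(v) = v_u + Σᵢ pᵢ (v_q)ᵢ`. -/
def sigmaForm {n : ℕ} (x v : CSpace n) : ℝ := v.1 + ∑ i : Fin n, x.2.2.1 i * v.2.1 i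

/-- The 2-form `ω = d(sσ) = ds ∧ σ + s dσ` at the point `x`:
`ω_x(v, w) = v_s σ_x(w) − w_s σ_x(v) + s Σᵢ((v_p)ᵢ (w_q)ᵢ − (v_q)ᵢ (w_p)ᵢ)`. -/
def omegaForm {n : ℕ} (x v w : CSpace n) : ℝ :=
  v.2.2.2 * sigmaForm x w - w.2.2.2 * sigmaForm x v +
    x.2.2.2 * ∑ i : Fin n, (v.2.2.1 i * w.2.1 i - v.2.1 i * w.2.2.1 i)

open MeasureTheory in
theorem hasFDerivAt_paramInt {H E : Type} [NormedAddCommGroup H] [NormedSpace ℝ H]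
    [FiniteDimensional ℝ H] [NormedAddCommGroup E] [NormedSpace ℝ E] [CompleteSpace E]
    (F : H × ℝ → E) (hF : ContDiff ℝ (⊤ : ℕ∞) F) (x₀ : H) :
    HasFDerivAt (fun x => ∫ t in (0:ℝ)..1, F (x, t))
      (∫ t in (0:ℝ)..1, (fderiv ℝ F (x₀, t)).comp (ContinuousLinearMap.inl ℝ H ℝ)) x₀ := by
  have hc : Continuous F := hF.continuous
  have hc' : Continuous (fun z : H × ℝ =>
      (fderiv ℝ F z).comp (ContinuousLinearMap.inl ℝ H ℝ)) :=
    (hF.continuous_fderiv (by simp)).clm_comp continuous_const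
  have : ProperSpace H := FiniteDimensional.proper ℝ H
  obtain ⟨C, hC⟩ := ((isCompact_closedBall x₀ 1).prod (isCompact_Icc (a := (0:ℝ)) (b := 1)))
    |>.exists_bound_of_continuousOn hc'.continuousOn
  refine intervalIntegral.hasFDerivAt_integral_of_dominated_of_fderiv_le
    (s := Metric.closedBall x₀ 1) (bound := fun _ => C)
    (F := fun x t => F (x, t))
    (F' := fun x t => (fderiv ℝ F (x, t)).comp (ContinuousLinearMap.inl ℝ H ℝ))
    (Metric.closedBall_mem_nhds x₀ one_pos) ?_ ?_ ?_ ?_ ?_ ?_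
  · exact Filter.Eventually.of_forall fun x =>
      (hc.comp (by fun_prop : Continuous fun t : ℝ => (x, t))).aestronglyMeasurable
  · exact (hc.comp (by fun_prop : Continuous fun t : ℝ => (x₀, t))).intervalIntegrable _ _
  · exact (hc'.comp (by fun_prop : Continuous fun t : ℝ => (x₀, t))).aestronglyMeasurable
  · refine Filter.Eventually.of_forall fun t ht x hx => hC (x, t) ⟨hx, ?_⟩
    rw [Set.uIoc_of_le zero_le_one] at ht
    exact ⟨ht.1.le, ht.2⟩
  · exact intervalIntegrable_const
  · refine Filter.Eventually.of_forall fun t _ x _ => ?_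
    have h1 : HasFDerivAt F (fderiv ℝ F (x, t)) (x, t) :=
      (hF.differentiable (by simp) _).hasFDerivAt
    exact h1.comp x (hasFDerivAt_prodMk_left x t)

theorem contDiff_paramInt_nat {H : Type} [NormedAddCommGroup H] [NormedSpace ℝ H]
    [FiniteDimensional ℝ H] (m : ℕ) : ∀ {E : Type} [NormedAddCommGroup E] [NormedSpace ℝ E]
    [CompleteSpace E] (F : H × ℝ → E), ContDiff ℝ (⊤ : ℕ∞) F →
    ContDiff ℝ m (fun x => ∫ t in (0:ℝ)..1, F (x, t)) := by
  induction m with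
  | zero =>
    intro E _ _ _ F hF
    refine contDiff_zero.2 (continuous_iff_continuousAt.2 fun x =>
      (hasFDerivAt_paramInt F hF x).continuousAt)
  | succ m ih =>
    intro E _ _ _ F hF
    push_cast
    refine contDiff_succ_iff_fderiv.2
      ⟨fun x => (hasFDerivAt_paramInt F hF x).differentiableAt, by simp, ?_⟩
    have : fderiv ℝ (fun x => ∫ t in (0:ℝ)..1, F (x, t)) = fun x =>
      ∫ t in (0:ℝ)..1, (fun z : H × ℝ =>
        (fderiv ℝ F z).comp (ContinuousLinearMap.inl ℝ H ℝ)) (x, t) :=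
      funext fun x => (hasFDerivAt_paramInt F hF x).fderiv
    rw [this]
    exact ih _ ((hF.fderiv_right (m := (⊤ : ℕ∞)) (by simp)).clm_comp contDiff_const)

theorem contDiff_paramInt {H E : Type} [NormedAddCommGroup H] [NormedSpace ℝ H]
    [FiniteDimensional ℝ H] [NormedAddCommGroup E] [NormedSpace ℝ E] [CompleteSpace E]
    (F : H × ℝ → E) (hF : ContDiff ℝ (⊤ : ℕ∞) F) :
    ContDiff ℝ (⊤ : ℕ∞) (fun x => ∫ t in (0:ℝ)..1, F (x, t)) :=
  contDiff_infty.2 fun m => contDiff_paramInt_nat m F hF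

theorem hadamard_div (n : ℕ) (f : CSpace n → ℝ)
    (hf : ContDiff ℝ (⊤ : ℕ∞) f) (c : ℝ) (hc : ∀ x : CSpace n, x.2.2.2 = 0 → f x = c) :
    ∃ g : CSpace n → ℝ, ContDiff ℝ (⊤ : ℕ∞) g ∧ ∀ x, f x = c + x.2.2.2 * g x := by
  let e : CSpace n := (0, 0, 0, 1)
  let γ : CSpace n × ℝ → CSpace n := fun z => (z.1.1, z.1.2.1, z.1.2.2.1, z.2 * z.1.2.2.2)
  have hγ : ContDiff ℝ (⊤ : ℕ∞) γ := by fun_prop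
  have hfd := hf.fderiv_right (m := (⊤ : ℕ∞)) (by simp)
  have hG : ContDiff ℝ (⊤ : ℕ∞) (fun z => fderiv ℝ f (γ z) e) :=
    (hfd.comp hγ).clm_apply contDiff_const
  refine ⟨_, contDiff_paramInt _ hG, fun x => ?_⟩
  have hd : ∀ t : ℝ, HasDerivAt (fun t => f (γ (x, t))) (x.2.2.2 * fderiv ℝ f (γ (x, t)) e) t := by
    intro t
    have h1 : HasFDerivAt f (fderiv ℝ f (γ (x, t))) (γ (x, t)) :=
      (hf.differentiable (by simp) _).hasFDerivAt
    have h2 : HasDerivAt (fun t => γ (x, t)) (x.2.2.2 • e) t := by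
      have : x.2.2.2 • e = (0, 0, 0, 1 * x.2.2.2) := by simp [e]
      rw [this]
      have k1 : HasDerivAt (fun t : ℝ => t * x.2.2.2) (1 * x.2.2.2) t :=
        (hasDerivAt_id t).mul_const _
      have k2 := (hasDerivAt_const t x.2.2.1).prodMk k1
      have k3 := (hasDerivAt_const t x.2.1).prodMk k2
      exact (hasDerivAt_const t x.1).prodMk k3
    have := h1.comp_hasDerivAt t h2
    rwa [map_smul, smul_eq_mul] at this
  have hcont : Continuous (fun t : ℝ => x.2.2.2 * fderiv ℝ f (γ (x, t)) e) :=
    continuous_const.mul (hG.continuous.comp (by fun_prop : Continuous fun t : ℝ => (x, t)))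
  have := intervalIntegral.integral_eq_sub_of_hasDerivAt (a := 0) (b := 1)
    (fun t _ => hd t) (hcont.intervalIntegrable _ _)
  rw [intervalIntegral.integral_const_mul] at this
  rw [this, hc (γ (x, 0)) (by simp [γ])]
  simp [γ]

/-- Every smooth function on `M` which is constant on the hypersurface
`{s = 0}` is admissible for the presymplectic form `ω = d(sσ)`: it has a smooth
hamiltonian vector field `X` with `ω_x(X(x), ·) = df_x`. -/
theorem constant_on_boundary_admissible (n : ℕ) (f : CSpace n → ℝ)
    (hf : ContDiff ℝ (⊤ : ℕ∞) f) (hconst : ∃ c : ℝ, ∀ x : CSpace n, x.2.2.2 = 0 → f x = c) :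
    ∃ X : CSpace n → CSpace n, ContDiff ℝ (⊤ : ℕ∞) X ∧
      ∀ (x v : CSpace n), omegaForm x (X x) v = fderiv ℝ f x v := by
  obtain ⟨c, hc⟩ := hconst
  obtain ⟨g, hg, hfg⟩ := hadamard_div n f hf c hc
  have hgd := hg.fderiv_right (m := (⊤ : ℕ∞)) (by simp)
  have hD : ∀ w : CSpace n, ContDiff ℝ (⊤ : ℕ∞) (fun x => fderiv ℝ g x w) :=
    fun w => hgd.clm_apply contDiff_const
  have hdf : ∀ x v : CSpace n, fderiv ℝ f x v = x.2.2.2 * fderiv ℝ g x v + v.2.2.2 * g x := by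
    intro x v
    have h1 : HasFDerivAt g (fderiv ℝ g x) x := (hg.differentiable (by simp) _).hasFDerivAt
    let L : CSpace n →L[ℝ] ℝ := (ContinuousLinearMap.snd ℝ _ _).comp
      ((ContinuousLinearMap.snd ℝ _ _).comp (ContinuousLinearMap.snd ℝ _ _))
    have h2 : HasFDerivAt (fun y : CSpace n => y.2.2.2) L x := L.hasFDerivAt
    have h3 := (h2.mul h1).const_add c
    have h4 : f = fun y => c + y.2.2.2 * g y := funext hfg
    have h5 : fderiv ℝ f x = x.2.2.2 • fderiv ℝ g x + g x • L := by
      conv_lhs => rw [h4]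
      exact h3.fderiv
    rw [h5]
    simp [L, mul_comm]
  let eu : CSpace n := (1, 0, 0, 0)
  let eq : Fin n → CSpace n := fun i => (0, Pi.single i 1, 0, 0)
  let ep : Fin n → CSpace n := fun i => (0, 0, Pi.single i 1, 0)
  let es : CSpace n := (0, 0, 0, 1)
  have hexp : ∀ v : CSpace n, v = v.1 • eu + ∑ i, v.2.1 i • eq i + ∑ i, v.2.2.1 i • ep i
      + v.2.2.2 • es := by
    intro v
    ext j <;> simp [eu, eq, ep, es, Prod.fst_sum, Prod.snd_sum, Finset.sum_apply, Pi.single_apply]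
  have hlin : ∀ x v : CSpace n, fderiv ℝ g x v = v.1 * fderiv ℝ g x eu
      + ∑ i, v.2.1 i * fderiv ℝ g x (eq i) + ∑ i, v.2.2.1 i * fderiv ℝ g x (ep i)
      + v.2.2.2 * fderiv ℝ g x es := by
    intro x v
    conv_lhs => rw [hexp v]
    simp only [map_add, map_sum, map_smul, smul_eq_mul]
  refine ⟨fun x => (-(g x + x.2.2.2 * fderiv ℝ g x es)
      + ∑ i, x.2.2.1 i * fderiv ℝ g x (ep i),
    fun i => -fderiv ℝ g x (ep i),
    fun i => fderiv ℝ g x (eq i) - x.2.2.1 i * fderiv ℝ g x eu,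
    x.2.2.2 * fderiv ℝ g x eu), ?_, ?_⟩
  · have h1 := hD eu
    have h2 := hD es
    have h3 := fun i => hD (eq i)
    have h4 := fun i => hD (ep i)
    refine ContDiff.prodMk ?_ (ContDiff.prodMk ?_ (ContDiff.prodMk ?_ ?_))
    · refine ContDiff.add (by fun_prop) (ContDiff.sum fun i _ => ContDiff.mul (by fun_prop) (h4 i))
    · exact contDiff_pi.2 fun i => (h4 i).neg
    · exact contDiff_pi.2 fun i => (h3 i).sub (ContDiff.mul (by fun_prop) h1)
    · fun_prop
  · intro x v
    rw [hdf, hlin]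
    simp only [omegaForm, sigmaForm]
    have e1 : ∑ i, x.2.2.1 i * -fderiv ℝ g x (ep i) = -∑ i, x.2.2.1 i * fderiv ℝ g x (ep i) := by
      simp
    have e2 : ∑ i, ((fderiv ℝ g x (eq i) - x.2.2.1 i * fderiv ℝ g x eu) * v.2.1 i
        - -fderiv ℝ g x (ep i) * v.2.2.1 i) = ∑ i, v.2.1 i * fderiv ℝ g x (eq i)
        + ∑ i, v.2.2.1 i * fderiv ℝ g x (ep i)
        - fderiv ℝ g x eu * ∑ i, x.2.2.1 i * v.2.1 i := by
      rw [Finset.mul_sum, ← Finset.sum_add_distrib, ← Finset.sum_sub_distrib]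
      exact Finset.sum_congr rfl fun i _ => by ring
    rw [e1, e2]
    ring
end
end
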